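/- Every bordered double circulant self-dual binary code C of length 92 with minimum weight 16 satisfies the weight enumerator relation A_18(C) = 121296 − 2·(A_16(C) − 4692), where A_i(C) denotes the number of codewords of C of Hamming weight i (i.e., C has weight enumerator of type W_{92,3}). -/

import Mathlib

/-- The standard inner product on `ι → ZMod 2`. -/
def dot {ι : Type*} [Fintype ι] (x y : ι → ZMod 2) : ZMod 2 := ∑ i, x i * y i

/-- A binary linear code is self-dual if it coincides with its dual. -/
def IsSelfDual {ι : Type*} [Fintype ι] (C : Submodule (ZMod 2) (ι → ZMod 2)) : Prop :=
  ∀ x, x ∈ C ↔ ∀ y ∈ C, dot x y = 0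

/-- `C` has minimum (nonzero) weight exactly `d`. -/
def MinWeightIs {ι : Type*} [Fintype ι] (C : Submodule (ZMod 2) (ι → ZMod 2)) (d : ℕ) : Prop :=
  (∃ x ∈ C, x ≠ 0 ∧ hammingNorm x = d) ∧ ∀ x ∈ C, x ≠ 0 → d ≤ hammingNorm x

/-- `A_i(C)`: the number of codewords of `C` of Hamming weight `i`. -/
noncomputable def weightEnum {ι : Type*} [Fintype ι] (C : Submodule (ZMod 2) (ι → ZMod 2)) (i : ℕ) : ℕ :=
  Set.ncard {x : ι → ZMod 2 | x ∈ C ∧ hammingNorm x = i}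

/-- Two codes are equivalent if a coordinate permutation maps one onto the other. -/
def CodeEquiv {ι : Type*} [Fintype ι] (C C' : Submodule (ZMod 2) (ι → ZMod 2)) : Prop :=
  ∃ σ : Equiv.Perm ι, Submodule.map (LinearMap.funLeft (ZMod 2) (ZMod 2) ⇑σ) C = C'

/-- The order of the automorphism group of a code: the number of coordinate
permutations mapping the code onto itself. -/
noncomputable def autGroupOrder {ι : Type*} [Fintype ι] (C : Submodule (ZMod 2) (ι → ZMod 2)) : ℕ :=
  Nat.card {σ : Equiv.Perm ι // Submodule.map (LinearMap.funLeft (ZMod 2) (ZMod 2) ⇑σ) C = C}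

/-- A circulant matrix: each row is the cyclic shift of the previous one. -/
def IsCirculant {n : ℕ} (R : Matrix (Fin n) (Fin n) (ZMod 2)) : Prop :=
  ∃ v : Fin n → ZMod 2, R = Matrix.circulant v

/-- The pure double circulant code with generator matrix `(I_n | R)`. -/
def pureDCC {n : ℕ} (R : Matrix (Fin n) (Fin n) (ZMod 2)) :
    Submodule (ZMod 2) (Fin n ⊕ Fin n → ZMod 2) :=
  Submodule.span (ZMod 2)
    (Set.range fun i : Fin n =>
      Sum.elim (fun j => if j = i then (1 : ZMod 2) else 0) (R i))

/-- A bordered matrix: first row `(0,1,…,1)`, first column `(0,1,…,1)ᵀ`, and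
lower-right block an `n × n` circulant matrix. -/
def IsBorderMatrix {n : ℕ} (B : Matrix (Fin (n + 1)) (Fin (n + 1)) (ZMod 2)) : Prop :=
  B 0 0 = 0 ∧ (∀ j, j ≠ 0 → B 0 j = 1) ∧ (∀ i, i ≠ 0 → B i 0 = 1) ∧
  ∃ R' : Matrix (Fin n) (Fin n) (ZMod 2), IsCirculant R' ∧
    ∀ i j : Fin n, B i.succ j.succ = R' i j

/-- The bordered double circulant code with generator matrix `(I_{n+1} | B)`. -/
def borderedDCC {n : ℕ} (B : Matrix (Fin (n + 1)) (Fin (n + 1)) (ZMod 2)) :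
    Submodule (ZMod 2) (Fin (n + 1) ⊕ Fin (n + 1) → ZMod 2) :=
  Submodule.span (ZMod 2)
    (Set.range fun i : Fin (n + 1) =>
      Sum.elim (fun j => if j = i then (1 : ZMod 2) else 0) (B i))

/-!
The rows of `(I | B)` have weight `46` (the first one) or `2 + w`, with `w` even by self-duality,
and they add up to the all-ones vector. In a self-orthogonal code the weight modulo `4` is additive,
so `92 ≡ 46 + 45 (2 + w)`, which gives `4 ∣ w`. Hence `s = (1, 0, …, 0 | 1, 0, …, 0)` satisfies
`s ⬝ c ≡ wt c / 2 (mod 2)` for every row `c`, thus for every codeword: `s` is a vector of weight `2`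
in the shadow of the code.

By self-duality the dual distance is `16`, so summing a polynomial of degree at most `15` in the
coordinates `(-1) ^ cⱼ` over the code picks out its constant term. For `f, g` in one variable, apply
this to `(f + g)(92 - 2 wt c)` and to `(-1) ^ (s ⬝ c) (f - g)(92 - 2 wt c)`, where
`92 - 2 wt c = ∑ⱼ (-1) ^ cⱼ`. The sign is `1` or `-1` according to whether `4` divides `wt c`, so
together they evaluate the sum of `f` over the doubly even and of `g` over the singly even weights,
provided that `deg (f + g) ≤ 15` and `deg (f - g) ≤ 13`. Taking for `f` and `g` the monic
polynomials of degree `14` with roots at the doubly even, respectively singly even, weights in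
`[20, 72]`, only the weights `0`, `16`, `18` and their complements contribute.
-/

open Polynomial

section Weight

variable {ι : Type*} [Fintype ι]

theorem hammingNorm_eq_sum_val (x : ι → ZMod 2) : hammingNorm x = ∑ i, (x i).val := by
  have val_eq : ∀ a : ZMod 2, a.val = if a ≠ 0 then 1 else 0 := by decide
  simp only [hammingNorm, Finset.card_filter, val_eq]

theorem natCast_hammingNorm (x : ι → ZMod 2) : (hammingNorm x : ZMod 2) = ∑ i, x i := by
  simp [hammingNorm_eq_sum_val]

theorem hammingNorm_one : hammingNorm (1 : ι → ZMod 2) = Fintype.card ι := by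
  simp [hammingNorm]

theorem hammingNorm_fin_succ {n : ℕ} (x : Fin (n + 1) → ZMod 2) :
    hammingNorm x = (x 0).val + hammingNorm (x ∘ Fin.succ) := by
  simp only [hammingNorm_eq_sum_val, Fin.sum_univ_succ, Function.comp_apply]

theorem hammingNorm_sumElim {κ : Type*} [Fintype κ] (x : ι → ZMod 2) (y : κ → ZMod 2) :
    hammingNorm (Sum.elim x y) = hammingNorm x + hammingNorm y := by
  simp only [hammingNorm_eq_sum_val, Fintype.sum_sum_type, Sum.elim_inl, Sum.elim_inr]

theorem hammingNorm_single_one [DecidableEq ι] (j : ι) :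
    hammingNorm (Pi.single j 1 : ι → ZMod 2) = 1 := by
  simp [hammingNorm, Pi.single_apply, Finset.filter_eq']

theorem hammingNorm_add_add_two_mul_hammingNorm_mul (x y : ι → ZMod 2) :
    hammingNorm (x + y) + 2 * hammingNorm (x * y) = hammingNorm x + hammingNorm y := by
  have val_add : ∀ a b : ZMod 2, (a + b).val + 2 * (a * b).val = a.val + b.val := by decide
  simp only [hammingNorm_eq_sum_val, Finset.mul_sum, ← Finset.sum_add_distrib, Pi.add_apply,
    Pi.mul_apply, val_add]

theorem hammingNorm_add_single_one [DecidableEq ι] (u : ι → ZMod 2) (j : ι) :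
    hammingNorm (u + Pi.single j 1) =
      if u j = 0 then hammingNorm u + 1 else hammingNorm u - 1 := by
  have inclusion_exclusion := hammingNorm_add_add_two_mul_hammingNorm_mul u (Pi.single j 1)
  rw [hammingNorm_single_one, ← Pi.single_mul_right, mul_one] at inclusion_exclusion
  have eq_zero_or_one : ∀ a : ZMod 2, a = 0 ∨ a = 1 := by decide
  rcases eq_zero_or_one (u j) with h | h
  · simpa [h] using inclusion_exclusion
  · rw [h, hammingNorm_single_one] at inclusion_exclusion
    rw [if_neg (by simp [h])]
    omega

theorem hammingNorm_add_one_add (x : ι → ZMod 2) :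
    hammingNorm (x + 1) + hammingNorm x = Fintype.card ι := by
  have val_add_one : ∀ a : ZMod 2, (a + 1).val + a.val = 1 := by decide
  simp [hammingNorm_eq_sum_val, ← Finset.sum_add_distrib, val_add_one]

theorem dot_eq_dotProduct (x y : ι → ZMod 2) : dot x y = x ⬝ᵥ y := rfl

theorem dot_eq_natCast_hammingNorm_mul (x y : ι → ZMod 2) :
    dot x y = (hammingNorm (x * y) : ZMod 2) :=
  (natCast_hammingNorm (x * y)).symm

theorem dot_self (x : ι → ZMod 2) : dot x x = (hammingNorm x : ZMod 2) := by
  have mul_self : ∀ a : ZMod 2, a * a = a := by decide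
  simp only [dot, mul_self, natCast_hammingNorm]

theorem natCast_hammingNorm_add_of_dot_eq_zero {x y : ι → ZMod 2} (h : dot x y = 0) :
    (hammingNorm (x + y) : ZMod 4) = hammingNorm x + hammingNorm y := by
  rw [dot_eq_natCast_hammingNorm_mul, ZMod.natCast_eq_zero_iff] at h
  obtain ⟨m, hm⟩ := h
  have inclusion_exclusion := hammingNorm_add_add_two_mul_hammingNorm_mul x y
  rw [← Nat.cast_add, ZMod.natCast_eq_natCast_iff, Nat.ModEq]
  omega

theorem natCast_hammingNorm_sum {κ : Type*} (s : Finset κ) (x : κ → ι → ZMod 2)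
    (hx : Pairwise fun i j ↦ dot (x i) (x j) = 0) :
    (hammingNorm (∑ i ∈ s, x i) : ZMod 4) = ∑ i ∈ s, (hammingNorm (x i) : ZMod 4) := by
  classical
  induction s using Finset.induction_on with
  | empty => simp
  | insert a s ha ih =>
    have dot_sum : dot (x a) (∑ i ∈ s, x i) = 0 := by
      rw [dot_eq_dotProduct, dotProduct_sum]
      exact Finset.sum_eq_zero fun i hi ↦ hx (ne_of_mem_of_not_mem hi ha).symm
    rw [Finset.sum_insert ha, Finset.sum_insert ha, natCast_hammingNorm_add_of_dot_eq_zero dot_sum,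
      ih]

end Weight

section Walsh

variable {ι : Type*} [Fintype ι]

/-- The Walsh character `x ↦ (-1) ^ (u ⬝ x)` of `𝔽₂^ι`. -/
def walsh (u : ι → ZMod 2) : AddChar (ι → ZMod 2) ℤ :=
  (AddChar.zmodChar 2 (ζ := (-1 : ℤ)) (by norm_num)).compAddMonoidHom
    (dotProductBilin (ZMod 2) (ZMod 2) u).toAddMonoidHom

theorem walsh_apply (u x : ι → ZMod 2) : walsh u x = (-1) ^ (dot u x).val := rfl

theorem walsh_eq_one_iff {u x : ι → ZMod 2} : walsh u x = 1 ↔ dot u x = 0 := by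
  have pow_val_eq_one : ∀ a : ZMod 2, (-1 : ℤ) ^ a.val = 1 ↔ a = 0 := by decide
  exact pow_val_eq_one _

theorem walsh_zero_left (x : ι → ZMod 2) : walsh 0 x = 1 := by
  rw [walsh_eq_one_iff, dot_eq_dotProduct, zero_dotProduct]

theorem walsh_add_left (u v x : ι → ZMod 2) : walsh (u + v) x = walsh u x * walsh v x := by
  simp only [walsh, AddChar.compAddMonoidHom_apply, map_add, LinearMap.toAddMonoidHom_coe,
    LinearMap.add_apply, AddChar.map_add_eq_mul]

theorem sum_walsh_single [DecidableEq ι] (x : ι → ZMod 2) :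
    ∑ j, walsh (Pi.single j 1) x = (Fintype.card ι : ℤ) - 2 * hammingNorm x := by
  have neg_one_pow_val : ∀ a : ZMod 2, (-1 : ℤ) ^ a.val = 1 - 2 * a.val := by decide
  simp [walsh_apply, dot_eq_dotProduct, neg_one_pow_val, hammingNorm_eq_sum_val,
    Finset.mul_sum]

theorem sum_walsh_eq_ite (C : Submodule (ZMod 2) (ι → ZMod 2)) [Fintype C] (u : ι → ZMod 2)
    [Decidable (∀ c ∈ C, dot u c = 0)] :
    ∑ c : C, walsh u c = if ∀ c ∈ C, dot u c = 0 then (Fintype.card C : ℤ) else 0 := by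
  classical
  have trivial_iff : (walsh u).compAddMonoidHom C.subtype.toAddMonoidHom = 0 ↔
      ∀ c ∈ C, dot u c = 0 := by
    simp [DFunLike.ext_iff, walsh_eq_one_iff]
  simp only [← trivial_iff]
  exact AddChar.sum_eq_ite ((walsh u).compAddMonoidHom C.subtype.toAddMonoidHom)

/-- The adjacency operator of the `n`-dimensional hypercube, acting on functions of the Hamming
weight: a vertex of weight `k` has `k` neighbours of weight `k - 1` and `n - k` of weight `k + 1`.
At `k = 0` the truncated `k - 1` is multiplied by zero. -/
def cubeAdjacency (n : ℕ) : Module.End ℤ (ℕ → ℤ) where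
  toFun g k := k * g (k - 1) + (n - k) * g (k + 1)
  map_add' g h := by ext k; simp only [Pi.add_apply]; ring
  map_smul' a g := by
    ext k; simp only [Pi.smul_apply, smul_eq_mul, RingHom.id_apply]; ring

theorem cubeAdjacency_apply (n : ℕ) (g : ℕ → ℤ) (k : ℕ) :
    cubeAdjacency n g k = k * g (k - 1) + (n - k) * g (k + 1) := rfl

theorem sum_hammingNorm_add_single [DecidableEq ι] (g : ℕ → ℤ) (u : ι → ZMod 2) :
    ∑ j, g (hammingNorm (u + Pi.single j 1)) =
      cubeAdjacency (Fintype.card ι) g (hammingNorm u) := by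
  have card_zeros : ((Finset.univ.filter fun j ↦ u j = 0).card : ℤ) =
      Fintype.card ι - hammingNorm u := by
    have card_add_card := Finset.card_filter_add_card_filter_not (s := Finset.univ) (u · = 0)
    rw [eq_sub_iff_add_eq, hammingNorm]
    exact_mod_cast card_add_card
  simp only [hammingNorm_add_single_one, apply_ite g, Finset.sum_ite, Finset.sum_const,
    nsmul_eq_mul, card_zeros, cubeAdjacency_apply]
  exact add_comm _ _

/-- The normalized Fourier coefficient `2⁻ⁿ ∑ₓ (-1) ^ (u ⬝ x) f (n - 2 wt x)` on `𝔽₂ⁿ`, as a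
function of `wt u`. Since `n - 2 wt x = ∑ⱼ (-1) ^ xⱼ`, multiplication by it acts on the Fourier
side as the adjacency operator of the hypercube, so the coefficients are those of `f` of this
operator applied to the indicator of weight `0`. -/
noncomputable def radialFourier (n : ℕ) (f : ℤ[X]) : ℕ → ℤ :=
  aeval (cubeAdjacency n) f (Pi.single 0 1)

variable {C : Submodule (ZMod 2) (ι → ZMod 2)} [Fintype C] {d : ℕ}

theorem sum_walsh_mul_pow (hd : ∀ x, (∀ c ∈ C, dot x c = 0) → x ≠ 0 → d ≤ hammingNorm x) (m : ℕ)
    (u : ι → ZMod 2) (hu : hammingNorm u + m < d) :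
    ∑ c : C, walsh u c * (Fintype.card ι - 2 * hammingNorm (c : ι → ZMod 2) : ℤ) ^ m =
      Fintype.card C * (cubeAdjacency (Fintype.card ι) ^ m) (Pi.single 0 1) (hammingNorm u) := by
  classical
  induction m generalizing u with
  | zero =>
    have orthogonal_iff : (∀ c ∈ C, dot u c = 0) ↔ u = 0 := by
      refine ⟨fun h ↦ by_contra fun hne ↦ absurd (hd u h hne) (by omega), ?_⟩
      rintro rfl c -
      exact zero_dotProduct c
    simp [sum_walsh_eq_ite, orthogonal_iff, Pi.single_apply]
  | succ m ih =>
    have expand (c : ι → ZMod 2) :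
        walsh u c * (Fintype.card ι - 2 * hammingNorm c : ℤ) ^ (m + 1) =
          ∑ j, walsh (u + Pi.single j 1) c * (Fintype.card ι - 2 * hammingNorm c : ℤ) ^ m := by
      simp only [walsh_add_left, ← Finset.sum_mul, ← Finset.mul_sum, sum_walsh_single]
      ring
    have ih_single (j : ι) := ih (u + Pi.single j 1) <| by
      rw [hammingNorm_add_single_one]; split_ifs <;> omega
    simp only [expand]
    rw [Finset.sum_comm]
    simp only [ih_single, ← Finset.mul_sum]
    rw [sum_hammingNorm_add_single, pow_succ', Module.End.mul_apply]

/-- For `u = 0` this is the fact that a code of dual distance `d` is an orthogonal array of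
strength `d - 1`. -/
theorem sum_walsh_mul_eval (hd : ∀ x, (∀ c ∈ C, dot x c = 0) → x ≠ 0 → d ≤ hammingNorm x)
    (u : ι → ZMod 2) (f : ℤ[X]) (hf : hammingNorm u + f.natDegree < d) :
    ∑ c : C, walsh u c * f.eval (Fintype.card ι - 2 * hammingNorm (c : ι → ZMod 2) : ℤ) =
      Fintype.card C * radialFourier (Fintype.card ι) f (hammingNorm u) := by
  have moment (m : ℕ) (hm : m ∈ Finset.range (f.natDegree + 1)) :=
    sum_walsh_mul_pow hd m u (by rw [Finset.mem_range] at hm; omega)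
  simp only [eval_eq_sum_range, Finset.mul_sum, mul_left_comm (walsh u _)]
  rw [Finset.sum_comm]
  simp only [← Finset.mul_sum]
  rw [Finset.sum_congr rfl fun m hm ↦ by rw [moment m hm]]
  simp only [radialFourier, aeval_eq_sum_range, LinearMap.sum_apply, Finset.sum_apply,
    LinearMap.smul_apply, Pi.smul_apply, smul_eq_mul, Finset.mul_sum, mul_left_comm]

end Walsh

section WeightEnum

variable {ι : Type*} [Fintype ι] {C : Submodule (ZMod 2) (ι → ZMod 2)}

theorem weightEnum_zero (C : Submodule (ZMod 2) (ι → ZMod 2)) : weightEnum C 0 = 1 := by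
  have zero_only : {x : ι → ZMod 2 | x ∈ C ∧ hammingNorm x = 0} = {0} := by
    ext x
    simp +contextual [C.zero_mem]
  rw [weightEnum, zero_only, Set.ncard_singleton]

theorem weightEnum_eq_zero {k : ℕ} (h : ∀ c ∈ C, hammingNorm c ≠ k) : weightEnum C k = 0 := by
  have no_codeword : {x : ι → ZMod 2 | x ∈ C ∧ hammingNorm x = k} = ∅ :=
    Set.eq_empty_of_forall_notMem fun x hx ↦ h x hx.1 hx.2
  rw [weightEnum, no_codeword, Set.ncard_empty]

theorem weightEnum_eq_zero_of_lt {d k : ℕ} (hd : ∀ c ∈ C, c ≠ 0 → d ≤ hammingNorm c)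
    (hk : 0 < k) (hkd : k < d) : weightEnum C k = 0 := by
  refine weightEnum_eq_zero fun c hc hck ↦ absurd (hd c hc ?_) (by omega)
  rw [← hammingNorm_pos_iff]
  omega

theorem weightEnum_compl (hone : 1 ∈ C) {j k : ℕ} (hjk : j + k = Fintype.card ι) :
    weightEnum C j = weightEnum C k := by
  refine Set.ncard_congr (fun x _ ↦ x + 1) ?_ (fun x y _ _ ↦ add_right_cancel) fun y hy ↦ ?_
  · rintro x ⟨hx, rfl⟩
    have := hammingNorm_add_one_add x
    exact ⟨C.add_mem hx hone, by omega⟩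
  · have := hammingNorm_add_one_add y
    exact ⟨y + 1, ⟨C.add_mem hy.1 hone, by have := hy.2; omega⟩, by
      ext i; simp [add_assoc, CharTwo.add_self_eq_zero]⟩

theorem sum_comp_hammingNorm {R : Type*} [NonAssocSemiring R] [Fintype C] (φ : ℕ → R) :
    ∑ c : C, φ (hammingNorm (c : ι → ZMod 2)) =
      ∑ k ∈ Finset.range (Fintype.card ι + 1), weightEnum C k * φ k := by
  have weightEnum_eq_card (k : ℕ) : weightEnum C k =
      (Finset.univ.filter fun c : C ↦ hammingNorm (c : ι → ZMod 2) = k).card := by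
    rw [weightEnum, ← Set.ncard_coe_finset, ← Set.ncard_image_of_injective _ Subtype.val_injective]
    congr 1
    ext x
    simp [and_comm]
  have weight_mem_range (c : C) (_ : c ∈ Finset.univ) :
      hammingNorm (c : ι → ZMod 2) ∈ Finset.range (Fintype.card ι + 1) :=
    Finset.mem_range_succ_iff.2 hammingNorm_le_card_fintype
  rw [← Finset.sum_fiberwise_of_maps_to weight_mem_range]
  refine Finset.sum_congr rfl fun k _ ↦ ?_
  rw [Finset.sum_congr rfl fun c hc ↦ by rw [(Finset.mem_filter.1 hc).2], Finset.sum_const,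
    nsmul_eq_mul, weightEnum_eq_card]

end WeightEnum

section SelfDual

variable {ι : Type*} [Fintype ι] {C : Submodule (ZMod 2) (ι → ZMod 2)}

theorem IsSelfDual.even_hammingNorm (hC : IsSelfDual C) {c : ι → ZMod 2} (hc : c ∈ C) :
    Even (hammingNorm c) := by
  rw [even_iff_two_dvd, ← ZMod.natCast_eq_zero_iff, ← dot_self]
  exact (hC c).1 hc c hc

theorem IsSelfDual.one_mem (hC : IsSelfDual C) : 1 ∈ C := by
  rw [hC]
  intro c hc
  rw [dot_eq_dotProduct, one_dotProduct, ← natCast_hammingNorm, ← dot_self]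
  exact (hC c).1 hc c hc

theorem IsSelfDual.card_sq [Fintype C] (hC : IsSelfDual C) :
    Fintype.card C ^ 2 = 2 ^ Fintype.card ι := by
  classical
  let B : LinearMap.BilinForm (ZMod 2) (ι → ZMod 2) := dotProductBilin (ZMod 2) (ZMod 2)
  have hB : B.Nondegenerate := by
    refine ⟨fun x hx ↦ dotProduct_eq_zero x hx, fun x hx ↦ dotProduct_eq_zero x fun y ↦ ?_⟩
    rw [dotProduct_comm]
    exact hx y
  have orthogonal_eq : B.orthogonal C = C := by
    ext x
    simp only [LinearMap.BilinForm.mem_orthogonal_iff, hC x, dot_eq_dotProduct]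
    exact forall₂_congr fun y _ ↦ by rw [dotProduct_comm]; rfl
  have finrank_eq := LinearMap.BilinForm.finrank_orthogonal hB C
  rw [orthogonal_eq, Module.finrank_pi] at finrank_eq
  have finrank_le := Submodule.finrank_le C
  rw [Module.finrank_pi] at finrank_le
  rw [Module.card_eq_pow_finrank (K := ZMod 2), ZMod.card, ← pow_mul]
  congr 1
  omega

/-- The Conway–Sloane shadow of a self-orthogonal code `C`: the vectors `s` with
`s ⬝ c ≡ wt c / 2 (mod 2)` for all `c ∈ C`. The congruence is doubled, to avoid halving `wt c`. -/
def codeShadow (C : Submodule (ZMod 2) (ι → ZMod 2)) : Set (ι → ZMod 2) :=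
  {s | ∀ c ∈ C, (hammingNorm c : ZMod 4) = 2 * (dot s c).val}

theorem mem_codeShadow_span {S : Set (ι → ZMod 2)} {s : ι → ZMod 2}
    (hS : ∀ x ∈ Submodule.span (ZMod 2) S, ∀ y ∈ Submodule.span (ZMod 2) S, dot x y = 0)
    (hs : ∀ x ∈ S, (hammingNorm x : ZMod 4) = 2 * (dot s x).val) :
    s ∈ codeShadow (Submodule.span (ZMod 2) S) := by
  intro c hc
  induction hc using Submodule.span_induction with
  | mem x hx => exact hs x hx
  | zero => simp [dot_eq_dotProduct]
  | add x y hx hy ihx ihy =>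
    have two_mul_val_add : ∀ a b : ZMod 2,
        (2 * (a + b).val : ZMod 4) = 2 * a.val + 2 * b.val := by decide
    rw [natCast_hammingNorm_add_of_dot_eq_zero (hS x hx y hy), ihx, ihy]
    simp only [dot_eq_dotProduct, dotProduct_add, two_mul_val_add]
  | smul a x _ ih =>
    have eq_zero_or_one : ∀ a : ZMod 2, a = 0 ∨ a = 1 := by decide
    rcases eq_zero_or_one a with rfl | rfl
    · simp [dot_eq_dotProduct]
    · rwa [one_smul]

theorem walsh_of_mem_codeShadow {s c : ι → ZMod 2} (hs : s ∈ codeShadow C) (hc : c ∈ C) :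
    walsh s c = if 4 ∣ hammingNorm c then 1 else -1 := by
  have neg_one_pow_val : ∀ a : ZMod 2,
      (-1 : ℤ) ^ a.val = if (2 * a.val : ZMod 4) = 0 then 1 else -1 := by decide
  rw [walsh_apply, neg_one_pow_val, ← hs c hc]
  simp only [ZMod.natCast_eq_zero_iff]

theorem sum_weightEnum_mul_eval_of_mem_codeShadow [Fintype C] {d : ℕ}
    (hd : ∀ x, (∀ c ∈ C, dot x c = 0) → x ≠ 0 → d ≤ hammingNorm x) {s : ι → ZMod 2}
    (hs : s ∈ codeShadow C) (f g : ℤ[X]) (hadd : (f + g).natDegree < d)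
    (hsub : hammingNorm s + (f - g).natDegree < d) :
    2 * ∑ k ∈ Finset.range (Fintype.card ι + 1), weightEnum C k *
        (if 4 ∣ k then f else g).eval (Fintype.card ι - 2 * k : ℤ) =
      Fintype.card C * (radialFourier (Fintype.card ι) (f + g) 0 +
        radialFourier (Fintype.card ι) (f - g) (hammingNorm s)) := by
  have sum_add := sum_walsh_mul_eval hd 0 (f + g) (by simpa using hadd)
  have sum_sub := sum_walsh_mul_eval hd s (f - g) hsub
  rw [hammingNorm_zero] at sum_add
  rw [← sum_comp_hammingNorm fun k ↦ (if 4 ∣ k then f else g).eval (Fintype.card ι - 2 * k : ℤ),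
    mul_add, ← sum_add, ← sum_sub, ← Finset.sum_add_distrib, Finset.mul_sum]
  refine Finset.sum_congr rfl fun c _ ↦ ?_
  rw [walsh_zero_left, walsh_of_mem_codeShadow hs c.2]
  split_ifs <;> simp only [eval_add, eval_sub] <;> ring

end SelfDual

section RadialFourier

theorem radialFourier_one (n k : ℕ) : radialFourier n 1 k = if k = 0 then 1 else 0 := by
  simp [radialFourier, Pi.single_apply]

theorem radialFourier_add (n : ℕ) (f g : ℤ[X]) :
    radialFourier n (f + g) = radialFourier n f + radialFourier n g := by
  simp only [radialFourier, map_add, LinearMap.add_apply]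

theorem radialFourier_sub (n : ℕ) (f g : ℤ[X]) :
    radialFourier n (f - g) = radialFourier n f - radialFourier n g := by
  simp only [radialFourier, map_sub, LinearMap.sub_apply]

theorem radialFourier_mul_X_sq_sub_C (n : ℕ) (f : ℤ[X]) (b : ℤ) (k : ℕ) :
    radialFourier n (f * (X ^ 2 - C b)) k =
      k * (k - 1) * radialFourier n f (k - 2) +
        (k * (n - k + 1) + (n - k) * (k + 1) - b) * radialFourier n f k +
        (n - k) * (n - k - 1) * radialFourier n f (k + 2) := by
  rw [mul_comm]
  simp only [radialFourier, map_mul, map_sub, aeval_X, aeval_C, pow_two,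
    Module.End.mul_apply, LinearMap.sub_apply, Pi.sub_apply, cubeAdjacency_apply,
    Module.algebraMap_end_apply, Pi.smul_apply, smul_eq_mul]
  rcases k with _ | k
  · simp only [Nat.cast_zero, Nat.cast_one, zero_mul, zero_add, Nat.sub_self]
    ring
  · simp only [Nat.cast_add, Nat.cast_one, add_tsub_cancel_right, Nat.reduceSubDiff]
    ring

end RadialFourier

section RootPairs

/-- The even monic polynomial `∏_{j < m} (X² - (a j)²)` with the roots `± a j`. It serves to
annihilate pairs of complementary weights, at which `n - 2 wt` takes opposite values. -/
noncomputable def rootPairProd (a : ℕ → ℤ) (m : ℕ) : ℤ[X] :=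
  ∏ j ∈ Finset.range m, (X ^ 2 - C (a j ^ 2))

theorem rootPairProd_zero (a : ℕ → ℤ) : rootPairProd a 0 = 1 := rfl

theorem rootPairProd_succ (a : ℕ → ℤ) (m : ℕ) :
    rootPairProd a (m + 1) = rootPairProd a m * (X ^ 2 - C (a m ^ 2)) :=
  Finset.prod_range_succ _ _

theorem eval_rootPairProd (a : ℕ → ℤ) (m : ℕ) (x : ℤ) :
    (rootPairProd a m).eval x = ∏ j ∈ Finset.range m, (x ^ 2 - a j ^ 2) := by
  simp only [rootPairProd, eval_prod, eval_sub, eval_pow, eval_X, eval_C]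

theorem monic_rootPairProd (a : ℕ → ℤ) (m : ℕ) : (rootPairProd a m).Monic :=
  monic_prod_of_monic _ _ fun _ _ ↦ monic_X_pow_sub_C _ two_ne_zero

theorem natDegree_rootPairProd (a : ℕ → ℤ) (m : ℕ) : (rootPairProd a m).natDegree = 2 * m := by
  rw [rootPairProd, natDegree_prod_of_monic _ _ fun _ _ ↦ monic_X_pow_sub_C _ two_ne_zero]
  simp only [natDegree_X_pow_sub_C, Finset.sum_const, Finset.card_range, smul_eq_mul, mul_comm]

theorem natDegree_rootPairProd_add_le (a b : ℕ → ℤ) (m : ℕ) :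
    (rootPairProd a m + rootPairProd b m).natDegree ≤ 2 * m := by
  simpa only [natDegree_rootPairProd, max_self] using
    natDegree_add_le (rootPairProd a m) (rootPairProd b m)

theorem natDegree_rootPairProd_sub_lt (a b : ℕ → ℤ) {m : ℕ} (hm : m ≠ 0) :
    (rootPairProd a m - rootPairProd b m).natDegree < 2 * m := by
  have degree_eq (r : ℕ → ℤ) : (rootPairProd r m).degree = (2 * m : ℕ) := by
    rw [degree_eq_natDegree (monic_rootPairProd r m).ne_zero, natDegree_rootPairProd]
  rcases eq_or_ne (rootPairProd a m - rootPairProd b m) 0 with h | h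
  · rw [h, natDegree_zero]
    omega
  rw [natDegree_lt_iff_degree_lt h, ← degree_eq a]
  exact degree_sub_lt_left ((degree_eq a).trans (degree_eq b).symm)
    (monic_rootPairProd a m).ne_zero
    ((monic_rootPairProd a m).leadingCoeff.trans (monic_rootPairProd b m).leadingCoeff.symm)

theorem radialFourier_rootPairProd_succ (n : ℕ) (a : ℕ → ℤ) (m k : ℕ) :
    radialFourier n (rootPairProd a (m + 1)) k =
      k * (k - 1) * radialFourier n (rootPairProd a m) (k - 2) +
        (k * (n - k + 1) + (n - k) * (k + 1) - a m ^ 2) * radialFourier n (rootPairProd a m) k +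
        (n - k) * (n - k - 1) * radialFourier n (rootPairProd a m) (k + 2) := by
  rw [rootPairProd_succ, radialFourier_mul_X_sq_sub_C]

end RootPairs

section LengthNinetyTwo

/-- The even monic polynomial of degree `14` vanishing at `92 - 2k` for the multiples `k` of `4`
with `20 ≤ k ≤ 72`. -/
noncomputable def doublyEvenAnnihilator : ℤ[X] := rootPairProd (fun j ↦ 8 * j + 4) 7

/-- The even monic polynomial of degree `14` vanishing at `92 - 2k` for the `k ≡ 2 (mod 4)` with
`22 ≤ k ≤ 70`. -/
noncomputable def singlyEvenAnnihilator : ℤ[X] := rootPairProd (fun j ↦ 8 * j) 7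

theorem eval_annihilator_eq_zero {k : ℕ} (heven : Even k) (hk : k ∈ Finset.Icc 20 72) :
    (if 4 ∣ k then doublyEvenAnnihilator else singlyEvenAnnihilator).eval (92 - 2 * k : ℤ) = 0 := by
  rw [apply_ite (eval _), doublyEvenAnnihilator, singlyEvenAnnihilator, eval_rootPairProd,
    eval_rootPairProd]
  have vanish : ∀ k ∈ Finset.Icc (20 : ℕ) 72, Even k →
      (if 4 ∣ k then ∏ j ∈ Finset.range 7, ((92 - 2 * k : ℤ) ^ 2 - (8 * j + 4) ^ 2)
        else ∏ j ∈ Finset.range 7, ((92 - 2 * k : ℤ) ^ 2 - (8 * j) ^ 2)) = 0 := by decide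
  exact vanish k hk heven

theorem radialFourier_annihilators :
    radialFourier 92 (doublyEvenAnnihilator + singlyEvenAnnihilator) 0 +
      radialFourier 92 (doublyEvenAnnihilator - singlyEvenAnnihilator) 2 = 1490748779520000 := by
  norm_num [doublyEvenAnnihilator, singlyEvenAnnihilator, radialFourier_add, radialFourier_sub,
    radialFourier_rootPairProd_succ, rootPairProd_zero, radialFourier_one]

variable {ι : Type*} [Fintype ι] {C : Submodule (ZMod 2) (ι → ZMod 2)}

theorem IsSelfDual.weightEnum_mul_eval_annihilator_eq_zero (hC : IsSelfDual C)
    (hι : Fintype.card ι = 92) (hd : ∀ c ∈ C, c ≠ 0 → 16 ≤ hammingNorm c) {k : ℕ}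
    (hk : k ≤ 92) (hne : k ∉ ({0, 16, 18, 74, 76, 92} : Finset ℕ)) :
    weightEnum C k * (if 4 ∣ k then doublyEvenAnnihilator else singlyEvenAnnihilator).eval
      (92 - 2 * k : ℤ) = 0 := by
  have weightEnum_small {j : ℕ} (hj : 0 < j) (hj16 : j < 16) : weightEnum C j = 0 :=
    weightEnum_eq_zero_of_lt hd hj hj16
  simp only [Finset.mem_insert, Finset.mem_singleton, not_or] at hne
  by_cases heven : Even k
  · obtain hlt | hmid | hgt : k < 16 ∨ k ∈ Finset.Icc 20 72 ∨ 76 < k := by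
      rw [Finset.mem_Icc]; grind
    · rw [weightEnum_small (by omega) hlt, Nat.cast_zero, zero_mul]
    · rw [eval_annihilator_eq_zero heven hmid, mul_zero]
    · rw [weightEnum_compl hC.one_mem (show k + (92 - k) = Fintype.card ι by omega),
        weightEnum_small (by omega) (by omega), Nat.cast_zero, zero_mul]
  · have no_odd_weight : weightEnum C k = 0 :=
      weightEnum_eq_zero fun c hc hck ↦ heven (hck ▸ hC.even_hammingNorm hc)
    rw [no_odd_weight, Nat.cast_zero, zero_mul]

theorem IsSelfDual.sum_weightEnum_mul_eval_annihilator (hC : IsSelfDual C)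
    (hι : Fintype.card ι = 92) (hd : ∀ c ∈ C, c ≠ 0 → 16 ≤ hammingNorm c) :
    ∑ k ∈ Finset.range 93, weightEnum C k *
        (if 4 ∣ k then doublyEvenAnnihilator else singlyEvenAnnihilator).eval (92 - 2 * k : ℤ) =
      2 * (doublyEvenAnnihilator.eval 92 + weightEnum C 16 * doublyEvenAnnihilator.eval 60 +
        weightEnum C 18 * singlyEvenAnnihilator.eval 56) := by
  have compl {j k : ℕ} (h : j + k = 92) : weightEnum C j = weightEnum C k :=
    weightEnum_compl hC.one_mem (h.trans hι.symm)
  have support_subset : ({0, 16, 18, 74, 76, 92} : Finset ℕ) ⊆ Finset.range 93 := by decide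
  rw [← Finset.sum_subset support_subset fun k hk hne ↦
    hC.weightEnum_mul_eval_annihilator_eq_zero hι hd (Finset.mem_range_succ_iff.1 hk) hne]
  have even_eval : ∀ x : ℤ, doublyEvenAnnihilator.eval (-x) = doublyEvenAnnihilator.eval x ∧
      singlyEvenAnnihilator.eval (-x) = singlyEvenAnnihilator.eval x := by
    simp [doublyEvenAnnihilator, singlyEvenAnnihilator, eval_rootPairProd]
  norm_num [weightEnum_zero, compl (show 74 + 18 = 92 by rfl), compl (show 76 + 16 = 92 by rfl),
    compl (show 92 + 0 = 92 by rfl), even_eval]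
  ring

theorem IsSelfDual.weightEnum_eighteen_of_mem_codeShadow (hC : IsSelfDual C)
    (hι : Fintype.card ι = 92) (hd : ∀ c ∈ C, c ≠ 0 → 16 ≤ hammingNorm c) {s : ι → ZMod 2}
    (hs : s ∈ codeShadow C) (hs2 : hammingNorm s = 2) :
    (weightEnum C 18 : ℤ) = 121296 - 2 * ((weightEnum C 16 : ℤ) - 4692) := by
  have := Fintype.ofFinite C
  have card_code : Fintype.card C = 2 ^ 46 := by
    have card_sq := hC.card_sq
    rw [hι, show 92 = 46 * 2 by rfl, pow_mul] at card_sq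
    exact Nat.pow_left_injective two_ne_zero card_sq
  have natDegree_add : (doublyEvenAnnihilator + singlyEvenAnnihilator).natDegree < 16 :=
    (natDegree_rootPairProd_add_le _ _ 7).trans_lt (by norm_num)
  have natDegree_sub : hammingNorm s + (doublyEvenAnnihilator - singlyEvenAnnihilator).natDegree
      < 16 := by
    have : (doublyEvenAnnihilator - singlyEvenAnnihilator).natDegree < 14 :=
      natDegree_rootPairProd_sub_lt _ _ (m := 7) (by norm_num)
    omega
  have averages := sum_weightEnum_mul_eval_of_mem_codeShadow (fun x hx ↦ hd x ((hC x).2 hx)) hs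
    doublyEvenAnnihilator singlyEvenAnnihilator natDegree_add natDegree_sub
  rw [hι, hs2, card_code, Nat.cast_ofNat, radialFourier_annihilators,
    hC.sum_weightEnum_mul_eval_annihilator hι hd] at averages
  norm_num [doublyEvenAnnihilator, singlyEvenAnnihilator, eval_rootPairProd,
    Finset.prod_range_succ] at averages
  omega

end LengthNinetyTwo

section BorderedDoubleCirculant

theorem hammingNorm_circulant {G : Type*} [Fintype G] [AddGroup G] (v : G → ZMod 2) (i : G) :
    hammingNorm (Matrix.circulant v i) = hammingNorm v := by
  simp only [hammingNorm_eq_sum_val, Matrix.circulant_apply]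
  exact (Equiv.subLeft i).sum_comp fun j ↦ (v j).val

theorem sum_circulant_col {G : Type*} [Fintype G] [AddGroup G] (v : G → ZMod 2) (j : G) :
    ∑ i, Matrix.circulant v i j = ∑ i, v i :=
  (Equiv.subRight j).sum_comp v

/-- The `i`-th row of the generator matrix `(I | B)`, with the identity written by `Pi.single`. -/
def generatorRow {n : ℕ} (B : Matrix (Fin n) (Fin n) (ZMod 2)) (i : Fin n) :
    Fin n ⊕ Fin n → ZMod 2 :=
  Sum.elim (Pi.single i 1) (B i)

theorem hammingNorm_generatorRow {n : ℕ} (B : Matrix (Fin n) (Fin n) (ZMod 2)) (i : Fin n) :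
    hammingNorm (generatorRow B i) = 1 + hammingNorm (B i) := by
  rw [generatorRow, hammingNorm_sumElim, hammingNorm_single_one]

variable {n : ℕ} {B : Matrix (Fin (n + 1)) (Fin (n + 1)) (ZMod 2)}

theorem borderedDCC_eq_span_generatorRow (B : Matrix (Fin (n + 1)) (Fin (n + 1)) (ZMod 2)) :
    borderedDCC B = Submodule.span (ZMod 2) (Set.range (generatorRow B)) := by
  have row_eq (i : Fin (n + 1)) :
      (fun j ↦ if j = i then (1 : ZMod 2) else 0) = Pi.single i 1 :=
    funext fun j ↦ (Pi.single_apply i 1 j).symm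
  simp only [borderedDCC, row_eq]
  rfl

theorem generatorRow_mem_borderedDCC (B : Matrix (Fin (n + 1)) (Fin (n + 1)) (ZMod 2))
    (i : Fin (n + 1)) : generatorRow B i ∈ borderedDCC B := by
  rw [borderedDCC_eq_span_generatorRow]
  exact Submodule.subset_span (Set.mem_range_self i)

theorem IsBorderMatrix.hammingNorm_row_zero (hB : IsBorderMatrix B) : hammingNorm (B 0) = n := by
  obtain ⟨corner, first_row, -⟩ := hB
  have tail_eq_one : B 0 ∘ Fin.succ = 1 := funext fun j ↦ first_row _ (Fin.succ_ne_zero j)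
  rw [hammingNorm_fin_succ, corner, tail_eq_one, hammingNorm_one, Fintype.card_fin,
    ZMod.val_zero, zero_add]

theorem IsBorderMatrix.exists_hammingNorm_row_succ_eq [NeZero n] (hB : IsBorderMatrix B) :
    ∃ w : ℕ, (∀ i : Fin n, hammingNorm (B i.succ) = 1 + w) ∧
      ∀ j : Fin n, ∑ i, B i j.succ = 1 + w := by
  obtain ⟨-, first_row, first_col, _, ⟨v, rfl⟩, block⟩ := hB
  refine ⟨hammingNorm v, fun i ↦ ?_, fun j ↦ ?_⟩
  · have tail_eq : B i.succ ∘ Fin.succ = Matrix.circulant v i := funext (block i)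
    rw [hammingNorm_fin_succ, first_col _ (Fin.succ_ne_zero i), tail_eq, hammingNorm_circulant]
    rfl
  · rw [Fin.sum_univ_succ, first_row _ (Fin.succ_ne_zero j), natCast_hammingNorm]
    simp only [block, sum_circulant_col]

theorem IsBorderMatrix.sum_col_zero (hB : IsBorderMatrix B) : ∑ i, B i 0 = n := by
  rw [Fin.sum_univ_succ, hB.1]
  simp [hB.2.2.1]

theorem sum_generatorRow {n : ℕ} {B : Matrix (Fin n) (Fin n) (ZMod 2)}
    (hB : ∀ j, ∑ i, B i j = 1) : ∑ i, generatorRow B i = 1 := by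
  ext (j | j)
  · simp [generatorRow, Finset.sum_apply]
  · simpa [generatorRow, Finset.sum_apply] using hB j

theorem IsSelfDual.hammingNorm_row_succ_borderedDCC (hn : n % 4 = 1) (hB : IsBorderMatrix B)
    (hC : IsSelfDual (borderedDCC B)) (i : Fin n) : (hammingNorm (B i.succ) : ZMod 4) = 1 := by
  have : NeZero n := ⟨by omega⟩
  obtain ⟨w, row_weight, col_sum⟩ := hB.exists_hammingNorm_row_succ_eq
  have row_mem := generatorRow_mem_borderedDCC B
  have even_w : (w : ZMod 2) = 0 := by
    have even_row := hC.even_hammingNorm (row_mem i.succ)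
    rw [hammingNorm_generatorRow, row_weight, ← add_assoc] at even_row
    rw [ZMod.natCast_eq_zero_iff, ← even_iff_two_dvd]
    exact (Nat.even_add.1 even_row).1 even_two
  have odd_n : (n : ZMod 2) = 1 := by
    rw [← Nat.cast_one, ZMod.natCast_eq_natCast_iff, Nat.ModEq]
    omega
  have sum_rows : ∑ i, generatorRow B i = 1 := sum_generatorRow fun j ↦ by
    cases j using Fin.cases with
    | zero => rw [hB.sum_col_zero, odd_n]
    | succ j => rw [col_sum, even_w, add_zero]
  have weight_sum := natCast_hammingNorm_sum Finset.univ (generatorRow B) fun i j _ ↦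
    (hC _).1 (row_mem i) _ (row_mem j)
  have n_eq_one : (n : ZMod 4) = 1 := by
    rw [← Nat.cast_one, ZMod.natCast_eq_natCast_iff, Nat.ModEq, hn]
  rw [sum_rows, hammingNorm_one, Fin.sum_univ_succ] at weight_sum
  simp only [hammingNorm_generatorRow, row_weight, hB.hammingNorm_row_zero, Fintype.card_sum,
    Fintype.card_fin, Finset.sum_const, Finset.card_univ, nsmul_eq_mul, Nat.cast_add,
    Nat.cast_one, n_eq_one] at weight_sum
  rw [row_weight, Nat.cast_add, Nat.cast_one]
  linear_combination -weight_sum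

theorem IsSelfDual.exists_mem_codeShadow_borderedDCC (hn : n % 4 = 1) (hB : IsBorderMatrix B)
    (hC : IsSelfDual (borderedDCC B)) : ∃ s ∈ codeShadow (borderedDCC B), hammingNorm s = 2 := by
  refine ⟨Sum.elim (Pi.single 0 1) (Pi.single 0 1), ?_, ?_⟩
  · have orthogonal (x) (hx : x ∈ borderedDCC B) := (hC x).1 hx
    rw [borderedDCC_eq_span_generatorRow] at orthogonal ⊢
    refine mem_codeShadow_span orthogonal ?_
    rintro _ ⟨i, rfl⟩
    have dot_eq : dot (Sum.elim (Pi.single 0 1) (Pi.single 0 1)) (generatorRow B i) =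
        (Pi.single i 1 : Fin (n + 1) → ZMod 2) 0 + B i 0 := by
      rw [dot_eq_dotProduct, generatorRow, sumElim_dotProduct_sumElim, single_one_dotProduct,
        single_one_dotProduct]
    have two_eq : ((1 + n : ℕ) : ZMod 4) = 2 := by
      rw [← Nat.cast_two, ZMod.natCast_eq_natCast_iff, Nat.ModEq]
      omega
    rw [dot_eq, hammingNorm_generatorRow]
    cases i using Fin.cases with
    | zero =>
      rw [hB.hammingNorm_row_zero, hB.1, two_eq, Pi.single_eq_same]
      rfl
    | succ i =>
      rw [Nat.cast_add, hC.hammingNorm_row_succ_borderedDCC hn hB, hB.2.2.1 _ (Fin.succ_ne_zero i),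
        Pi.single_eq_of_ne (Fin.succ_ne_zero i).symm]
      rfl
  · rw [hammingNorm_sumElim, hammingNorm_single_one]

end BorderedDoubleCirculant

theorem weight_enum_bordered_dcc_92 (B : Matrix (Fin 46) (Fin 46) (ZMod 2))
    (hB : IsBorderMatrix (n := 45) B) (hsd : IsSelfDual (borderedDCC (n := 45) B))
    (hmin : MinWeightIs (borderedDCC (n := 45) B) 16) :
    (weightEnum (borderedDCC (n := 45) B) 18 : ℤ) =
      121296 - 2 * ((weightEnum (borderedDCC (n := 45) B) 16 : ℤ) - 4692) := by
  obtain ⟨s, hs, hs2⟩ := hsd.exists_mem_codeShadow_borderedDCC (by norm_num) hB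
  exact hsd.weightEnum_eighteen_of_mem_codeShadow (by simp) hmin.2 hs hs2
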